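/- arXiv:2211.05176 — 3 statements merged into one kernel-verified Lean document; each statement's English description precedes it below -/
import Mathlib

section
/- Let (X, μ) be a probability space, let ν > 1, 1 < p < ν, S ≥ 0 and λ ≥ 0 be real numbers, and let f : X → ℝ be a bounded nonnegative measurable function. Suppose that for every real q ≥ 1 one has ‖f‖_{2νq} ≤ (1 + S·q·√λ / √(2q − 1))^{1/q} · ‖f‖_{2pq}. Then the essential supremum of f satisfies ‖f‖_∞ ≤ exp( S·√(λν) / (√ν − √p) ) · ‖f‖_{2p}. -/
open MeasureTheory Real

/-!
Put `q_k = (ν/p)^k`, so that `2ν q_k = 2p q_{k+1}`. Chaining the hypothesis over `k < n` bounds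
`‖f‖_{2p q_n}` by `‖f‖_{2p}` times the product of the factors. Since `1 + x ≤ exp x` and
`2q - 1 ≥ q` for `q ≥ 1`, the `k`-th factor is at most `exp (S √λ / √q_k)`, and
`1/√q_k = (√p/√ν)^k` is a geometric sequence with total sum `√ν/(√ν - √p)`. The bound is therefore
uniform in `n`, and it passes to the sup norm because a bound on `‖f‖_r` along exponents `r → ∞`
forces `μ {|f| ≥ c} ≤ (B/c)^r → 0` for every `c > B` (Chebyshev).
-/

open Filter Topology in
/-- A uniform bound on the `L^r` norms along a sequence of exponents tending to infinity is a bound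
on the essential supremum. No finiteness of the measure is needed. -/
lemma eLpNorm_top_le_of_tendsto_atTop {X : Type*} [MeasurableSpace X] {μ : Measure X}
    {f : X → ℝ} (hf : AEStronglyMeasurable f μ) {r : ℕ → ℝ} (hr : Tendsto r atTop atTop)
    {B : ENNReal} (hB : ∀ n, eLpNorm f (ENNReal.ofReal (r n)) μ ≤ B) :
    eLpNorm f ⊤ μ ≤ B := by
  rw [eLpNorm_exponent_top]
  by_contra! h
  obtain ⟨c, hBc, hc⟩ := exists_between h
  have hc0 : c ≠ 0 := (bot_le.trans_lt hBc).ne'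
  have hctop : c ≠ ⊤ := hc.ne_top
  have hm : μ {x | c ≤ ‖f x‖ₑ} ≤ 0 := by
    have hlim : Tendsto (fun n => (B / c) ^ r n) atTop (𝓝 0) :=
      (ENNReal.tendsto_rpow_atTop_of_base_lt_one
        ((ENNReal.div_lt_iff (Or.inl hc0) (Or.inl hctop)).2 (by simpa using hBc))).comp hr
    refine ge_of_tendsto hlim ?_
    filter_upwards [hr.eventually_gt_atTop 0] with n hn
    have hcheb := mul_meas_ge_le_pow_eLpNorm' μ (p := ENNReal.ofReal (r n))
      (by simpa using hn) ENNReal.ofReal_ne_top hf c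
    rw [ENNReal.toReal_ofReal hn.le] at hcheb
    rw [ENNReal.div_rpow_of_nonneg _ _ hn.le,
      ENNReal.le_div_iff_mul_le (Or.inl (by simp [ENNReal.rpow_eq_zero_iff, hc0, hctop]))
        (Or.inl (ENNReal.rpow_ne_top_of_nonneg hn.le hctop)), mul_comm]
    exact hcheb.trans (ENNReal.rpow_le_rpow (hB n) hn.le)
  refine hc.not_ge (essSup_le_of_ae_le c ?_)
  have hae : ∀ᵐ x ∂μ, ¬ c ≤ ‖f x‖ₑ := by
    rw [ae_iff]
    simpa using hm
  filter_upwards [hae] with x hx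
  exact (not_le.1 hx).le

/-- One reverse-Hölder factor, bounded by an exponential whose exponent is summable along
`q = (ν/p)^k`. -/
lemma moser_factor_le {S lam q : ℝ} (hS : 0 ≤ S) (hq : 1 ≤ q) :
    (1 + S * q * √lam / √(2 * q - 1)) ^ (1 / q) ≤ exp (S * √lam / √q) := by
  have hq0 : 0 < q := by linarith
  have hsq : 0 < √q := sqrt_pos.2 hq0
  have hle : S * q * √lam / √(2 * q - 1) ≤ S * √lam / √q * q := by
    rw [div_mul_eq_mul_div, mul_right_comm]
    gcongr
    linarith
  calc (1 + S * q * √lam / √(2 * q - 1)) ^ (1 / q)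
      ≤ (exp (S * √lam / √q * q)) ^ (1 / q) := by
        gcongr
        rw [add_comm]
        exact (add_le_add_left hle 1).trans (add_one_le_exp _)
    _ = exp (S * √lam / √q) := by
        rw [← exp_mul]
        congr 1
        field_simp

/-- Moser iteration core: on a probability space, iterating the family of
reverse-Hölder inequalities `‖f‖_{2νq} ≤ (1 + S q √λ / √(2q-1))^{1/q} ‖f‖_{2pq}`
yields the sup-norm bound `‖f‖_∞ ≤ exp(S √(λν)/(√ν - √p)) ‖f‖_{2p}`. -/
theorem moser_iteration_core
    {X : Type*} [MeasurableSpace X] (μ : Measure X) [IsProbabilityMeasure μ]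
    (ν p S lam : ℝ) (hν : 1 < ν) (hp1 : 1 < p) (hpν : p < ν)
    (hS : 0 ≤ S) (hlam : 0 ≤ lam)
    (f : X → ℝ) (hf_meas : Measurable f) (hf_nonneg : ∀ x, 0 ≤ f x)
    (hf_bdd : ∃ C : ℝ, ∀ x, f x ≤ C)
    (hrec : ∀ q : ℝ, 1 ≤ q →
      eLpNorm f (ENNReal.ofReal (2 * ν * q)) μ ≤
        ENNReal.ofReal ((1 + S * q * Real.sqrt lam / Real.sqrt (2 * q - 1)) ^ (1 / q)) *
          eLpNorm f (ENNReal.ofReal (2 * p * q)) μ) :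
    eLpNorm f ⊤ μ ≤
      ENNReal.ofReal (Real.exp (S * Real.sqrt (lam * ν) / (Real.sqrt ν - Real.sqrt p))) *
        eLpNorm f (ENNReal.ofReal (2 * p)) μ := by
  have hp0 : 0 < p := by linarith
  have hν0 : 0 < ν := by linarith
  have hsν : 0 < √ν := sqrt_pos.2 hν0
  have hsp : 0 < √p := sqrt_pos.2 hp0
  have hspν : √p < √ν := sqrt_lt_sqrt hp0.le hpν
  have hratio : 1 < ν / p := (one_lt_div hp0).2 hpν
  have hiter : ∀ n : ℕ, eLpNorm f (ENNReal.ofReal (2 * p * (ν / p) ^ n)) μ ≤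
      ENNReal.ofReal (exp (∑ k ∈ Finset.range n, S * √lam * (√p / √ν) ^ k)) *
        eLpNorm f (ENNReal.ofReal (2 * p)) μ := by
    intro n
    induction n with
    | zero => simp
    | succ n ih =>
      have hq : 1 ≤ (ν / p) ^ n := one_le_pow₀ hratio.le
      have hexp : 2 * p * (ν / p) ^ (n + 1) = 2 * ν * (ν / p) ^ n := by
        rw [pow_succ]
        field_simp
      have hsqrt : S * √lam / √((ν / p) ^ n) = S * √lam * (√p / √ν) ^ n := by
        have h1 : √((ν / p) ^ n) = (√ν / √p) ^ n := by
          rw [← sqrt_div hν0.le, sqrt_eq_iff_mul_self_eq (by positivity) (by positivity),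
            ← mul_pow, mul_self_sqrt (by positivity)]
        rw [h1, div_eq_mul_inv, ← inv_pow, inv_div]
      rw [hexp, Finset.sum_range_succ, add_comm, exp_add, ENNReal.ofReal_mul (exp_pos _).le]
      refine ((hrec _ hq).trans ?_).trans_eq (mul_assoc _ _ _).symm
      refine mul_le_mul' (ENNReal.ofReal_le_ofReal ?_) ih
      exact (moser_factor_le hS hq).trans_eq (by rw [hsqrt])
  have hsum : ∀ n : ℕ, ∑ k ∈ Finset.range n, S * √lam * (√p / √ν) ^ k ≤
      S * √(lam * ν) / (√ν - √p) := by
    intro n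
    have hr1 : √p / √ν < 1 := (div_lt_one hsν).2 hspν
    have hgeom := (hasSum_geometric_of_lt_one (by positivity) hr1).mul_left (S * √lam)
    have hval : S * √(lam * ν) / (√ν - √p) = S * √lam * (1 - √p / √ν)⁻¹ := by
      have h2 : √ν - √p ≠ 0 := (sub_pos.2 hspν).ne'
      rw [sqrt_mul hlam, one_sub_div hsν.ne', inv_div]
      ring
    rw [hval]
    exact sum_le_hasSum _ (fun k _ => by positivity) hgeom
  refine eLpNorm_top_le_of_tendsto_atTop hf_meas.aestronglyMeasurable
    (r := fun n => 2 * p * (ν / p) ^ n) ?_ (fun n => (hiter n).trans ?_)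
  · exact (tendsto_pow_atTop_atTop_of_one_lt hratio).const_mul_atTop (by positivity)
  · gcongr
    exact hsum n
end

section
/- Let X be a compact topological space equipped with a Borel probability measure μ, let m be a positive integer, and let V be a finite-dimensional real subspace of the space of continuous functions from X to the Euclidean space ℝ^m. Suppose K ≥ 0 is a real number such that every f ∈ V satisfies sup_{x ∈ X} ‖f(x)‖ ≤ K · ( ∫_X ‖f(x)‖² dμ(x) )^{1/2}. Then dim V ≤ m · K². -/
open MeasureTheory

/-!
Choose an orthonormal basis `b` of the image of `V` in `L²(μ)` and represent it by continuous
functions `e i ∈ V`. Fix a point `x` and a coordinate `j`, and test the hypothesis on the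
reproducing function `f = ∑ i, (e i x) j • e i`. With `t = ∑ i, ((e i x) j)²` we have
`t = (f x) j ≤ ‖f x‖` and `‖f‖₂² = t`, so `t ≤ K √t`, hence `t ≤ K²`. Summing over the `m`
coordinates gives `∑ i, ‖e i x‖² ≤ m K²` at every point; since each `e i` has unit `L²`-norm,
integrating the left side against the probability measure `μ` gives `dim V`. This coordinatewise
argument replaces the choice of a maximum point of `∑ i, ‖e i x‖²` and the count of the
codimension of the evaluation kernel.
-/

theorem norm_toLp_sq_eq_integral
    {X : Type*} [TopologicalSpace X] [CompactSpace X] [MeasurableSpace X] [BorelSpace X]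
    (μ : Measure X) [IsFiniteMeasure μ] {m : ℕ} (f : C(X, EuclideanSpace ℝ (Fin m))) :
    ‖ContinuousMap.toLp (E := EuclideanSpace ℝ (Fin m)) 2 μ ℝ f‖ ^ 2 = ∫ x, ‖f x‖ ^ 2 ∂μ := by
  rw [← real_inner_self_eq_norm_sq, L2.inner_def]
  refine integral_congr_ae ?_
  filter_upwards [ContinuousMap.coeFn_toLp (p := 2) (𝕜 := ℝ) μ f] with x hx
  rw [hx, real_inner_self_eq_norm_sq]

/-- Peter Li's dimension estimate (L² version) for the trivial rank-`m` bundle: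
if every function in a finite-dimensional space `V` of continuous `ℝ^m`-valued
functions satisfies `‖f‖_∞ ≤ K ‖f‖_2`, then `dim V ≤ m K²`. -/
theorem peter_li_dimension_estimate
    {X : Type*} [TopologicalSpace X] [CompactSpace X]
    [MeasurableSpace X] [BorelSpace X]
    (μ : Measure X) [IsProbabilityMeasure μ]
    (m : ℕ) (hm : 0 < m)
    (V : Submodule ℝ C(X, EuclideanSpace ℝ (Fin m))) [FiniteDimensional ℝ V]
    (K : ℝ) (hK : 0 ≤ K)
    (hbound : ∀ f ∈ V, (⨆ x : X, ‖f x‖) ≤ K * (∫ x, ‖f x‖ ^ 2 ∂μ) ^ (1/2 : ℝ)) :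
    (Module.finrank ℝ V : ℝ) ≤ m * K ^ 2 := by
  have hpt : ∀ f ∈ V, ∀ x, ‖f x‖ ≤
      K * ‖ContinuousMap.toLp (E := EuclideanSpace ℝ (Fin m)) 2 μ ℝ f‖ := by
    intro f hf x
    have hb : BddAbove (Set.range fun x => ‖f x‖) :=
      (isCompact_range f.continuous.norm).bddAbove
    refine (le_ciSup hb x).trans ((hbound f hf).trans_eq ?_)
    rw [← norm_toLp_sq_eq_integral, ← Real.sqrt_eq_rpow, Real.sqrt_sq (norm_nonneg _)]
  set T : V →ₗ[ℝ] Lp (EuclideanSpace ℝ (Fin m)) 2 μ :=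
    (ContinuousMap.toLp (E := EuclideanSpace ℝ (Fin m)) 2 μ ℝ).toLinearMap ∘ₗ V.subtype with hT
  have hTn : ∀ (f : V) x, ‖(f : C(X, EuclideanSpace ℝ (Fin m))) x‖ ≤ K * ‖T f‖ :=
    fun f x => hpt f f.2 x
  have hTi : ∀ f : V, ‖T f‖ ^ 2 = ∫ x, ‖(f : C(X, EuclideanSpace ℝ (Fin m))) x‖ ^ 2 ∂μ :=
    fun f => norm_toLp_sq_eq_integral μ f.1
  -- The sup bound makes a function of `V` vanish as soon as its `L²`-class does; for general `μ`,
  -- which may vanish on open sets, this is not automatic.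
  have hinj : Function.Injective T := by
    rw [injective_iff_map_eq_zero]
    intro f hf
    ext1
    ext1 x
    have := hTn f x
    rw [hf, norm_zero, mul_zero] at this
    exact norm_le_zero_iff.mp this
  have hfin : Module.finrank ℝ (LinearMap.range T) = Module.finrank ℝ V :=
    LinearMap.finrank_range_of_inj hinj
  let b := stdOrthonormalBasis ℝ (LinearMap.range T)
  choose e he using fun i => (b i).2
  have hon : Orthonormal ℝ fun i => T (e i) := by
    simp only [he]
    exact b.orthonormal.comp_linearIsometry (LinearMap.range T).subtypeₗᵢ
  have hcoord : ∀ x j, ∑ i, ((e i : C(X, EuclideanSpace ℝ (Fin m))) x j) ^ 2 ≤ K ^ 2 := by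
    intro x j
    set t := ∑ i, ((e i : C(X, EuclideanSpace ℝ (Fin m))) x j) ^ 2 with ht
    have ht0 : 0 ≤ t := Finset.sum_nonneg fun i _ => sq_nonneg _
    let f : V := ∑ i, ((e i : C(X, EuclideanSpace ℝ (Fin m))) x j) • e i
    have hfx : (f : C(X, EuclideanSpace ℝ (Fin m))) x j = t := by
      simp [f, ht, sq]
    have hfn : ‖T f‖ ^ 2 = t := by
      rw [← real_inner_self_eq_norm_sq]
      simp only [f, map_sum, map_smul]
      rw [hon.inner_sum]
      simp [ht, sq]
    have h1 : t ≤ K * ‖T f‖ := by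
      refine le_trans ?_ (hTn f x)
      rw [← hfx]
      exact (Real.le_norm_self _).trans (PiLp.norm_apply_le _ j)
    have h2 : ‖T f‖ ≤ K := by
      by_contra! h
      nlinarith [norm_nonneg (T f)]
    rw [← hfn]
    exact pow_le_pow_left₀ (norm_nonneg _) h2 2
  have hsum : ∀ x, ∑ i, ‖(e i : C(X, EuclideanSpace ℝ (Fin m))) x‖ ^ 2 ≤ m * K ^ 2 := by
    intro x
    simp only [EuclideanSpace.real_norm_sq_eq]
    rw [Finset.sum_comm]
    exact (Finset.sum_le_sum fun j _ => hcoord x j).trans_eq (by simp)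
  have hint : ∀ i, Integrable (fun x => ‖(e i : C(X, EuclideanSpace ℝ (Fin m))) x‖ ^ 2) μ :=
    fun i => ((e i).1.continuous.norm.pow 2).integrable_of_hasCompactSupport
      (HasCompactSupport.of_compactSpace _)
  calc (Module.finrank ℝ V : ℝ)
      = ∑ i, ∫ x, ‖(e i : C(X, EuclideanSpace ℝ (Fin m))) x‖ ^ 2 ∂μ := by
        simp [← hTi, hon.1, hfin]
    _ = ∫ x, ∑ i, ‖(e i : C(X, EuclideanSpace ℝ (Fin m))) x‖ ^ 2 ∂μ :=
        (integral_finsetSum _ fun i _ => hint i).symm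
    _ ≤ ∫ _, (m * K ^ 2 : ℝ) ∂μ :=
        integral_mono (integrable_finsetSum _ fun i _ => hint i) (integrable_const _) hsum
    _ = m * K ^ 2 := by simp
end

section
/- Let X be a compact topological space equipped with a Borel probability measure μ, let m be a positive integer, let p ≥ 1 be a real number, and let V be a finite-dimensional real subspace of the space of continuous functions from X to the Euclidean space ℝ^m. Suppose A ≥ 0 is a real number such that every f ∈ V satisfies sup_{x ∈ X} ‖f(x)‖ ≤ A · ( ∫_X ‖f(x)‖^{2p} dμ(x) )^{1/(2p)}. Then dim V ≤ m · A^{2p}. -/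
/-!
Interpolating `‖f‖_{2p}^{2p} ≤ ‖f‖_∞^{2p-2} ‖f‖_2^2` turns the hypothesis into the `L²` bound
`‖f‖_∞² ≤ A^{2p} ‖f‖_2²` on `V` (`PeterLi.norm_sq_le`). In particular `V` embeds in `L²`, so it has
an `L²`-orthonormal basis `e` (`PeterLi.exists_orthonormal`). For fixed `x` and a coordinate `j`,
testing the bound on `f = ∑ i, e i (x)_j • e i`, the function representing `g ↦ g(x)_j`, gives
`∑ i, (e i (x)_j)² ≤ A^{2p}` (`PeterLi.sum_coord_sq_le`). Summing over the `m` coordinates and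
integrating `∑ i, ‖e i (x)‖²`, whose integral is `dim V`, gives the claim.
-/

open MeasureTheory

namespace PeterLi

variable {X : Type*} [TopologicalSpace X] [CompactSpace X] [MeasurableSpace X] {m : ℕ}

lemma integrable_of_continuous [BorelSpace X] (μ : Measure X) [IsFiniteMeasure μ] {f : X → ℝ}
    (hf : Continuous f) : Integrable f μ :=
  hf.integrable_of_hasCompactSupport (HasCompactSupport.of_compactSpace f)

/-- Interpolation: an `L^∞`–`L^{2p}` bound with constant `A` implies an `L^∞`–`L²` bound with
constant `A ^ p`. -/
lemma norm_sq_le [BorelSpace X] (μ : Measure X) [IsProbabilityMeasure μ] {p A : ℝ} (hp : 1 ≤ p) (hA : 0 ≤ A)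
    (f : C(X, EuclideanSpace ℝ (Fin m)))
    (h : (⨆ x : X, ‖f x‖) ≤ A * (∫ x, ‖f x‖ ^ (2 * p) ∂μ) ^ (1 / (2 * p))) :
    ‖f‖ ^ 2 ≤ A ^ (2 * p) * ∫ x, ‖f x‖ ^ 2 ∂μ := by
  rw [← ContinuousMap.norm_eq_iSup_norm] at h
  have hB : 0 ≤ A ^ (2 * p) := Real.rpow_nonneg hA _
  have hI : 0 ≤ ∫ x, ‖f x‖ ^ 2 ∂μ := integral_nonneg fun x => by positivity
  rcases (norm_nonneg f).eq_or_lt with h0 | hM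
  · rw [← h0]
    simpa using mul_nonneg hB hI
  have hJ : 0 ≤ ∫ x, ‖f x‖ ^ (2 * p) ∂μ := integral_nonneg fun x => by positivity
  have hsplit : ∀ t : ℝ, 0 ≤ t → t ^ (2 * p) = t ^ (2 * p - 2) * t ^ 2 := by
    intro t ht
    rw [← Real.rpow_natCast t 2, ← Real.rpow_add_of_nonneg ht (by linarith) (by norm_num)]
    congr 1
    push_cast
    ring
  have hJI : ∫ x, ‖f x‖ ^ (2 * p) ∂μ ≤ ‖f‖ ^ (2 * p - 2) * ∫ x, ‖f x‖ ^ 2 ∂μ := by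
    rw [← integral_const_mul]
    refine integral_mono (integrable_of_continuous μ ?_) (integrable_of_continuous μ ?_) ?_
    · exact f.continuous.norm.rpow_const fun x => Or.inr (by linarith)
    · exact continuous_const.mul (f.continuous.norm.pow 2)
    · intro x
      simp only
      rw [hsplit _ (norm_nonneg _)]
      gcongr
      · linarith
      · exact f.norm_coe_le_norm x
  have h1 : ‖f‖ ^ (2 * p) ≤ A ^ (2 * p) * ∫ x, ‖f x‖ ^ (2 * p) ∂μ := by
    calc ‖f‖ ^ (2 * p) ≤ (A * (∫ x, ‖f x‖ ^ (2 * p) ∂μ) ^ (1 / (2 * p))) ^ (2 * p) :=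
          Real.rpow_le_rpow hM.le h (by linarith)
      _ = A ^ (2 * p) * ∫ x, ‖f x‖ ^ (2 * p) ∂μ := by
          rw [Real.mul_rpow hA (by positivity), ← Real.rpow_mul hJ,
            one_div_mul_cancel (by linarith), Real.rpow_one]
  have hpos : 0 < ‖f‖ ^ (2 * p - 2) := Real.rpow_pos_of_pos hM _
  refine le_of_mul_le_mul_left ?_ hpos
  calc ‖f‖ ^ (2 * p - 2) * ‖f‖ ^ 2 = ‖f‖ ^ (2 * p) := (hsplit _ hM.le).symm
    _ ≤ A ^ (2 * p) * ∫ x, ‖f x‖ ^ (2 * p) ∂μ := h1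
    _ ≤ A ^ (2 * p) * (‖f‖ ^ (2 * p - 2) * ∫ x, ‖f x‖ ^ 2 ∂μ) := by gcongr
    _ = _ := by ring

lemma norm_toLp_sq [BorelSpace X] (μ : Measure X) [IsFiniteMeasure μ] (f : C(X, EuclideanSpace ℝ (Fin m))) :
    ‖ContinuousMap.toLp (E := EuclideanSpace ℝ (Fin m)) 2 μ ℝ f‖ ^ 2 = ∫ x, ‖f x‖ ^ 2 ∂μ := by
  rw [← real_inner_self_eq_norm_sq, L2.inner_def]
  refine integral_congr_ae ?_
  filter_upwards [ContinuousMap.coeFn_toLp (p := 2) (𝕜 := ℝ) μ f] with x hx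
  rw [hx, real_inner_self_eq_norm_sq]

/-- An `L²`-orthonormal basis of `V`, obtained by pulling back one of the image of `V` in `L²`.
Orthonormality is recorded as Parseval's identity for linear combinations. -/
lemma exists_orthonormal [BorelSpace X] (μ : Measure X) [IsFiniteMeasure μ]
    (V : Submodule ℝ C(X, EuclideanSpace ℝ (Fin m))) [FiniteDimensional ℝ V]
    (hV : ∀ f ∈ V, ∫ x, ‖f x‖ ^ 2 ∂μ = 0 → f = 0) :
    ∃ e : Fin (Module.finrank ℝ V) → C(X, EuclideanSpace ℝ (Fin m)),
      (∀ i, e i ∈ V) ∧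
      ∀ c : Fin (Module.finrank ℝ V) → ℝ,
        ∫ x, ‖(∑ i, c i • e i) x‖ ^ 2 ∂μ = ∑ i, c i ^ 2 := by
  let T : C(X, EuclideanSpace ℝ (Fin m)) →ₗ[ℝ] Lp (EuclideanSpace ℝ (Fin m)) 2 μ :=
    (ContinuousMap.toLp (E := EuclideanSpace ℝ (Fin m)) 2 μ ℝ).toLinearMap
  have hT : ∀ f, ‖T f‖ ^ 2 = ∫ x, ‖f x‖ ^ 2 ∂μ := norm_toLp_sq μ
  have hinj : Function.Injective (T.domRestrict V) := by
    intro f g hfg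
    have hfg' : T f = T g := hfg
    refine Subtype.ext (sub_eq_zero.1 (hV _ (V.sub_mem f.2 g.2) ?_))
    rw [← hT, map_sub, hfg']
    simp
  let W := LinearMap.range (T.domRestrict V)
  have hfin : Module.finrank ℝ W = Module.finrank ℝ V := LinearMap.finrank_range_of_inj hinj
  let b : OrthonormalBasis (Fin (Module.finrank ℝ V)) ℝ W :=
    (stdOrthonormalBasis ℝ W).reindex (finCongr hfin)
  choose e he using fun i => (b i).2
  refine ⟨fun i => e i, fun i => (e i).2, fun c => ?_⟩
  have he' : ∀ i, T (e i) = b i := he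
  have hsum : T (∑ i, c i • (e i : C(X, EuclideanSpace ℝ (Fin m)))) =
      ((∑ i, c i • b i : W) : Lp (EuclideanSpace ℝ (Fin m)) 2 μ) := by
    simp [map_sum, he']
  rw [← hT, hsum]
  change ‖(∑ i, c i • b i : W)‖ ^ 2 = _
  rw [← real_inner_self_eq_norm_sq, b.orthonormal.inner_sum]
  simp [sq]

/-- The diagonal of the reproducing kernel in the `j`-th coordinate is at most the constant `B`
of the `L^∞`–`L²` bound. -/
lemma sum_coord_sq_le (μ : Measure X) {ι : Type*} [Fintype ι] {B : ℝ} (hB : 0 ≤ B)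
    (e : ι → C(X, EuclideanSpace ℝ (Fin m)))
    (he : ∀ c : ι → ℝ, ∫ x, ‖(∑ i, c i • e i) x‖ ^ 2 ∂μ = ∑ i, c i ^ 2)
    (hb : ∀ c : ι → ℝ, ‖∑ i, c i • e i‖ ^ 2 ≤ B * ∫ x, ‖(∑ i, c i • e i) x‖ ^ 2 ∂μ)
    (x : X) (j : Fin m) : ∑ i, (e i x j) ^ 2 ≤ B := by
  set S := ∑ i, (e i x j) ^ 2 with hS
  have h := hb fun i => e i x j
  rw [he] at h
  have hval : (∑ i, (e i x j) • e i) x j = S := by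
    simp [hS, sq]
  have h1 : S ≤ ‖∑ i, (e i x j) • e i‖ := by
    calc S ≤ ‖(∑ i, (e i x j) • e i) x j‖ := by rw [hval]; exact Real.le_norm_self _
      _ ≤ ‖(∑ i, (e i x j) • e i) x‖ := PiLp.norm_apply_le _ _
      _ ≤ _ := ContinuousMap.norm_coe_le_norm _ _
  have hS0 : 0 ≤ S := Finset.sum_nonneg fun i _ => sq_nonneg _
  rcases hS0.eq_or_lt with h0 | hpos
  · rw [← h0]; exact hB
  · have h2 : S ^ 2 ≤ B * S := (pow_le_pow_left₀ hS0 h1 2).trans h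
    nlinarith

end PeterLi

/-- Peter Li's dimension estimate with the `L^{2p}`-norm (Lemma 2.4 of the paper),
for the trivial rank-`m` bundle: if every function in a finite-dimensional space `V`
of continuous `ℝ^m`-valued functions satisfies `‖f‖_∞ ≤ A ‖f‖_{2p}`, then
`dim V ≤ m A^{2p}`. -/
theorem peter_li_dimension_estimate_lp
    {X : Type*} [TopologicalSpace X] [CompactSpace X]
    [MeasurableSpace X] [BorelSpace X]
    (μ : Measure X) [IsProbabilityMeasure μ]
    (m : ℕ) (hm : 0 < m) (p : ℝ) (hp : 1 ≤ p)
    (V : Submodule ℝ C(X, EuclideanSpace ℝ (Fin m))) [FiniteDimensional ℝ V]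
    (A : ℝ) (hA : 0 ≤ A)
    (hbound : ∀ f ∈ V,
      (⨆ x : X, ‖f x‖) ≤ A * (∫ x, ‖f x‖ ^ (2 * p) ∂μ) ^ (1 / (2 * p))) :
    (Module.finrank ℝ V : ℝ) ≤ m * A ^ (2 * p) := by
  have hL2 : ∀ f ∈ V, ‖f‖ ^ 2 ≤ A ^ (2 * p) * ∫ x, ‖f x‖ ^ 2 ∂μ := fun f hf =>
    PeterLi.norm_sq_le μ hp hA f (hbound f hf)
  obtain ⟨e, heV, he⟩ := PeterLi.exists_orthonormal μ V fun f hf h0 => by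
    have h := hL2 f hf
    rw [h0, mul_zero] at h
    exact norm_eq_zero.1 (pow_eq_zero_iff two_ne_zero |>.1 (le_antisymm h (sq_nonneg _)))
  have hpt : ∀ x, ∑ i, ‖e i x‖ ^ 2 ≤ m * A ^ (2 * p) := by
    intro x
    calc ∑ i, ‖e i x‖ ^ 2 = ∑ j, ∑ i, (e i x j) ^ 2 := by
          rw [Finset.sum_comm]
          simp [EuclideanSpace.norm_sq_eq]
      _ ≤ ∑ _j : Fin m, A ^ (2 * p) := Finset.sum_le_sum fun j _ =>
          PeterLi.sum_coord_sq_le μ (Real.rpow_nonneg hA _) e he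
            (fun c => hL2 _ (V.sum_mem fun i _ => V.smul_mem _ (heV i))) x j
      _ = m * A ^ (2 * p) := by simp
  have hcont : ∀ i, Continuous fun x => ‖e i x‖ ^ 2 := fun i => (e i).continuous.norm.pow 2
  have hone : ∀ i, ∫ x, ‖e i x‖ ^ 2 ∂μ = 1 := by
    intro i
    have hs : ∑ k, (Pi.single i 1 : Fin (Module.finrank ℝ V) → ℝ) k • e k = e i := by
      rw [Finset.sum_eq_single i (fun k _ hk => by
          rw [Pi.single_eq_of_ne hk]; exact zero_smul ℝ (e k))
        (fun h => absurd (Finset.mem_univ i) h), Pi.single_eq_same]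
      exact one_smul ℝ (e i)
    have h := he (Pi.single i 1)
    rw [hs] at h
    simpa [Pi.single_apply] using h
  calc (Module.finrank ℝ V : ℝ) = ∫ x, ∑ i, ‖e i x‖ ^ 2 ∂μ := by
        rw [integral_finsetSum _ fun i _ => PeterLi.integrable_of_continuous μ (hcont i)]
        simp [hone]
    _ ≤ ∫ _x, m * A ^ (2 * p) ∂μ :=
        integral_mono (PeterLi.integrable_of_continuous μ
          (continuous_finsetSum _ fun i _ => hcont i)) (integrable_const _) hpt
    _ = m * A ^ (2 * p) := by simp
end
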